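/- arXiv:cs/0509074 — 3 statements merged into one kernel-verified Lean document; each statement's English description precedes it below -/
import Mathlib

section
/- For f ∈ L₁[0,1], define χ(f) : [0,1]×ℝ → {−1,0,1} by χ(f)(s,t) = 1 if f(s) > 0 and 0 ≤ t ≤ f(s), χ(f)(s,t) = −1 if f(s) < 0 and 0 ≤ t ≤ −f(s), and χ(f)(s,t) = 0 otherwise. Then for all f, g ∈ L₁[0,1], ‖χ(f) − χ(g)‖_{L₁([0,1]×ℝ)} = ‖f − g‖₁, where [0,1]×ℝ carries the product Lebesgue measure. -/
/-!
By Tonelli the left-hand side is the iterated integral over `s` and then `t`, so it is enough to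
compute, for reals `a = f s` and `b = g s`, the integral over `t` of the distance between the two
layer functions (`lintegral_layer`). For `a ≤ b` and `t ≠ 0` that distance is the sum of the
indicators of `(max a 0, b]` (the part of `[a, b]` right of `0`) and of `(max (-b) 0, -a]` (the
reflection of the part left of `0`), whose lengths add up to `b - a`. Measurability on the
product holds because `chi f` is a Borel function of `(f s, t)`.
-/

open MeasureTheory

/-- The "vertical layer" map `χ(f)(s,t)`: `1` if `f(s) > 0` and `0 ≤ t ≤ f(s)`,
`−1` if `f(s) < 0` and `0 ≤ t ≤ −f(s)`, and `0` otherwise. -/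
noncomputable def chi (f : ℝ → ℝ) (p : ℝ × ℝ) : ℝ :=
  if 0 < f p.1 ∧ 0 ≤ p.2 ∧ p.2 ≤ f p.1 then 1
  else if f p.1 < 0 ∧ 0 ≤ p.2 ∧ p.2 ≤ -f p.1 then -1
  else 0

/-- The layer function `t ↦ χ(f)(s,t)` as a function of the pair `(f s, t)`. -/
noncomputable def layer (p : ℝ × ℝ) : ℝ := chi (fun x => x) p

lemma chi_eq_layer (f : ℝ → ℝ) (p : ℝ × ℝ) : chi f p = layer (f p.1, p.2) := rfl

lemma measurable_layer : Measurable layer := by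
  unfold layer chi
  refine Measurable.ite ?_ measurable_const (Measurable.ite ?_ measurable_const measurable_const)
  · exact (measurableSet_lt measurable_const measurable_fst).inter
      ((measurableSet_le measurable_const measurable_snd).inter
        (measurableSet_le measurable_snd measurable_fst))
  · exact (measurableSet_lt measurable_fst measurable_const).inter
      ((measurableSet_le measurable_const measurable_snd).inter
        (measurableSet_le measurable_snd measurable_fst.neg))

lemma aemeasurable_chi {f : ℝ → ℝ} {μ : Measure ℝ} (hf : AEMeasurable f μ) :
    AEMeasurable (chi f) (μ.prod (volume : Measure ℝ)) :=
  measurable_layer.comp_aemeasurable (hf.comp_fst.prodMk measurable_snd.aemeasurable)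

/-- The point `t = 0` is a genuine exception, for instance when `a = 0 < b`
or `a < 0 < b`. -/
lemma abs_layer_sub {a b t : ℝ} (hab : a ≤ b) (ht : t ≠ 0) :
    ENNReal.ofReal |layer (a, t) - layer (b, t)| =
      (Set.Ioc (max a 0) b).indicator 1 t + (Set.Ioc (max (-b) 0) (-a)).indicator 1 t := by
  simp only [layer, chi, Set.indicator_apply, Set.mem_Ioc, max_lt_iff, Pi.one_apply]
  split_ifs <;> first
    | (exfalso; grind)
    | norm_num

lemma lintegral_layer_of_le {a b : ℝ} (hab : a ≤ b) :
    ∫⁻ t, ENNReal.ofReal |layer (a, t) - layer (b, t)| = ENNReal.ofReal |a - b| := by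
  have hae : ∀ᵐ t : ℝ, t ≠ 0 := by simp [ae_iff]
  rw [lintegral_congr_ae (hae.mono fun t ht => abs_layer_sub hab ht),
    lintegral_add_left (measurable_one.indicator measurableSet_Ioc),
    lintegral_indicator_one measurableSet_Ioc, lintegral_indicator_one measurableSet_Ioc,
    Real.volume_Ioc, Real.volume_Ioc, abs_of_nonpos (by linarith)]
  rcases le_total 0 a with ha | ha
  · rw [max_eq_left ha, max_eq_right (by linarith), ENNReal.ofReal_of_nonpos (p := -a - 0)
      (by linarith), add_zero, neg_sub]
  · rw [max_eq_right ha]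
    rcases le_total 0 b with hb | hb
    · rw [max_eq_right (by linarith), ← ENNReal.ofReal_add (by linarith) (by linarith)]
      congr 1; ring
    · rw [max_eq_left (by linarith), ENNReal.ofReal_of_nonpos (p := b - 0) (by linarith), zero_add]
      congr 1; ring

lemma lintegral_layer (a b : ℝ) :
    ∫⁻ t, ENNReal.ofReal |layer (a, t) - layer (b, t)| = ENNReal.ofReal |a - b| := by
  rcases le_total a b with h | h
  · exact lintegral_layer_of_le h
  · simp_rw [abs_sub_comm (layer (a, _)), abs_sub_comm a b]
    exact lintegral_layer_of_le h

/-- `‖χ(f) − χ(g)‖_{L₁([0,1]×ℝ)} = ‖f − g‖_{L₁[0,1]}`. -/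
theorem chi_isometry (f g : ℝ → ℝ)
    (hf : IntegrableOn f (Set.Icc 0 1)) (hg : IntegrableOn g (Set.Icc 0 1)) :
    ∫ p, |chi f p - chi g p|
        ∂((volume.restrict (Set.Icc (0 : ℝ) 1)).prod (volume : Measure ℝ)) =
      ∫ t in Set.Icc (0 : ℝ) 1, |f t - g t| := by
  have hm : AEMeasurable (fun p => |chi f p - chi g p|)
      ((volume.restrict (Set.Icc (0 : ℝ) 1)).prod (volume : Measure ℝ)) :=
    ((aemeasurable_chi hf.aemeasurable).sub (aemeasurable_chi hg.aemeasurable)).abs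
  have hm' : AEMeasurable (fun t => |f t - g t|) (volume.restrict (Set.Icc (0 : ℝ) 1)) :=
    (hf.aemeasurable.sub hg.aemeasurable).abs
  rw [integral_eq_lintegral_of_nonneg_ae (ae_of_all _ fun _ => abs_nonneg _)
      hm.aestronglyMeasurable,
    integral_eq_lintegral_of_nonneg_ae (ae_of_all _ fun _ => abs_nonneg _) hm'.aestronglyMeasurable,
    lintegral_prod _ hm.ennreal_ofReal]
  simp only [chi_eq_layer, lintegral_layer]
end

section
/- (Pietsch factorization, special case.) Let Y be a normed space, N a positive integer, and A : ℝ^N → Y a linear operator. Suppose K > 0 is such that for every m and every x₁,...,x_m ∈ ℝ^N one has Σ_{i=1}^m ‖A x_i‖_Y ≤ K·max_{1≤k≤N} Σ_{i=1}^m |x_i(k)|. Then there exists a probability vector σ = (σ(1),...,σ(N)) (σ(k) ≥ 0, Σ_k σ(k) = 1) such that ‖Ax‖_Y ≤ K·Σ_{k=1}^N σ(k)·|x(k)| for all x ∈ ℝ^N. In other words, A factors as A = R∘I where I : ℓ_∞^N → L₁(σ) is the formal identity and R : L₁(σ) → Y has operator norm at most K. -/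
open Finset

/-!
Write `F x` for the vector `k ↦ K |x k| - ‖A x‖` of `ℝ^N`. Since `F` is positively homogeneous,
a convex combination of values of `F` is a plain sum `∑ F (y i)`, and the hypothesis says that
such a sum has a nonnegative coordinate (`exists_nonneg_of_mem_convexHull`). So the convex hull
of the range of `F` misses the open orthant of vectors with negative coordinates. By Hahn–Banach
some functional separates the two; it is nonnegative on the range of `F`, its coefficients are
nonnegative, and their sum is positive (`exists_nonneg_coeffs`). Dividing the coefficients by
their sum gives `σ`.
-/

/-- The vector with coordinates `K |x k| - ‖A x‖`; the conclusion of Pietsch's theorem says that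
its `σ`-average is nonnegative for every `x`. -/
def pietschDefect {Y : Type} [NormedAddCommGroup Y] [NormedSpace ℝ Y] {N : ℕ}
    (A : (Fin N → ℝ) →ₗ[ℝ] Y) (K : ℝ) (x : Fin N → ℝ) : Fin N → ℝ :=
  fun k => K * |x k| - ‖A x‖

/-- A convex set containing `0` that misses the open negative orthant is supported at `0` by a
functional with nonnegative coefficients of positive sum. -/
lemma exists_nonneg_coeffs {N : ℕ} {C : Set (Fin N → ℝ)} (hC : Convex ℝ C)
    (h0 : (0 : Fin N → ℝ) ∈ C) (hpos : ∀ v ∈ C, ∃ k, 0 ≤ v k) :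
    ∃ s : Fin N → ℝ, (∀ k, 0 ≤ s k) ∧ 0 < ∑ k, s k ∧ ∀ v ∈ C, 0 ≤ ∑ k, s k * v k := by
  have hneg : {v : Fin N → ℝ | ∀ k, v k < 0} = Set.univ.pi fun _ => Set.Iio 0 := by
    ext v; simp
  obtain ⟨f, u, hfn, hfC⟩ := geometric_hahn_banach_open
    (s := {v : Fin N → ℝ | ∀ k, v k < 0}) (t := C)
    (by rw [hneg]; exact convex_pi fun _ _ => convex_Iio 0)
    (by rw [hneg]; exact isOpen_set_pi Set.finite_univ fun _ _ => isOpen_Iio) hC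
    (Set.disjoint_left.2 fun v hv hvC => by
      obtain ⟨k, hk⟩ := hpos v hvC
      exact absurd (hv k) (not_lt.2 hk))
  set s : Fin N → ℝ := fun k => f (Pi.single k 1) with hs
  have hf : ∀ v, f v = ∑ k, s k * v k := fun v => by
    conv_lhs => rw [pi_eq_sum_univ' v]
    simp [hs, mul_comm, map_sum]
  have hu : u ≤ 0 := by simpa using hfC 0 h0
  have hS : 0 < ∑ k, s k := by
    have := hfn (fun _ => -1) (fun _ => by norm_num)
    rw [hf] at this
    simp only [mul_neg, mul_one, sum_neg_distrib] at this
    linarith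
  have hu0 : 0 ≤ u := by
    by_contra! hlt
    -- The constant vector `u / ∑ s` is negative, yet `f` takes the value `u` there.
    have := hfn (fun _ => u / ∑ k, s k) (fun _ => div_neg_of_neg_of_pos hlt hS)
    rw [hf, ← Finset.sum_mul, mul_div_cancel₀ _ hS.ne'] at this
    exact lt_irrefl _ this
  refine ⟨s, fun k => ?_, hS, fun v hv => ?_⟩
  · by_contra! hlt
    -- `f` vanishes at the negative vector `-e_k + (s k / ∑ s) • 1`.
    have := hfn (fun j => s k / (∑ k, s k) - (Pi.single k 1 : Fin N → ℝ) j) (fun j => by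
      have h1 := div_neg_of_neg_of_pos hlt hS
      have h2 : 0 ≤ (Pi.single k 1 : Fin N → ℝ) j := by
        rw [Pi.single_apply]; split_ifs <;> norm_num
      linarith)
    rw [hf] at this
    simp only [mul_sub, sum_sub_distrib] at this
    rw [← Finset.sum_mul, mul_div_cancel₀ _ hS.ne'] at this
    simp [Pi.single_apply] at this
    linarith
  · rw [← hf]
    exact hu0.trans (hfC v hv)

/-- Absorbing the weights of a convex combination into the vectors turns the summing hypothesis
into a statement about the convex hull. -/
lemma exists_nonneg_of_mem_convexHull {Y : Type} [NormedAddCommGroup Y] [NormedSpace ℝ Y]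
    {N : ℕ} (hN : 0 < N) (A : (Fin N → ℝ) →ₗ[ℝ] Y) {K : ℝ}
    (h : ∀ (m : ℕ) (x : Fin m → (Fin N → ℝ)),
      ∑ i, ‖A (x i)‖ ≤ K * ⨆ k : Fin N, ∑ i, |x i k|)
    {v : Fin N → ℝ} (hv : v ∈ convexHull ℝ (Set.range (pietschDefect A K))) :
    ∃ k, 0 ≤ v k := by
  have : Nonempty (Fin N) := ⟨⟨0, hN⟩⟩
  obtain ⟨ι, _, w, z, hw, -, hz, rfl⟩ := mem_convexHull_iff_exists_fintype.1 hv
  choose y hy using hz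
  have e := Fintype.equivFin ι
  have hm := h (Fintype.card ι) (fun i => w (e.symm i) • y (e.symm i))
  rw [e.symm.sum_comp (fun i => ‖A (w i • y i)‖)] at hm
  obtain ⟨k, hk⟩ := exists_eq_ciSup_of_finite
    (f := fun k : Fin N => ∑ i, |(w (e.symm i) • y (e.symm i)) k|)
  rw [← hk] at hm
  rw [e.symm.sum_comp (fun i => |(w i • y i) k|), mul_sum] at hm
  refine ⟨k, ?_⟩
  have : (∑ i, w i • z i) k = ∑ i, K * |(w i • y i) k| - ∑ i, ‖A (w i • y i)‖ := by
    rw [← sum_sub_distrib, Finset.sum_apply]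
    refine sum_congr rfl fun i _ => ?_
    simp only [← hy i, pietschDefect, Pi.smul_apply, smul_eq_mul, map_smul, norm_smul, abs_mul,
      Real.norm_eq_abs, abs_of_nonneg (hw i)]
    ring
  rw [this]
  linarith

/-- Pietsch factorization (special case): if `A : ℓ_∞^N → Y` satisfies
`Σ_i ‖A x_i‖ ≤ K·max_k Σ_i |x_i(k)|` for all finite families, then there is a
probability vector `σ` with `‖Ax‖ ≤ K·Σ_k σ(k)|x(k)|` for all `x`; i.e. `A` factors
through the formal identity `ℓ_∞^N → L₁(σ)` with the second factor of norm at most `K`. -/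
theorem pietsch_factorization (Y : Type) [NormedAddCommGroup Y] [NormedSpace ℝ Y]
    (N : ℕ) (hN : 0 < N) (A : (Fin N → ℝ) →ₗ[ℝ] Y) (K : ℝ) (hK : 0 < K)
    (h : ∀ (m : ℕ) (x : Fin m → (Fin N → ℝ)),
      ∑ i, ‖A (x i)‖ ≤ K * ⨆ k : Fin N, ∑ i, |x i k|) :
    ∃ σ : Fin N → ℝ, (∀ k, 0 ≤ σ k) ∧ (∑ k, σ k = 1) ∧
      ∀ x : Fin N → ℝ, ‖A x‖ ≤ K * ∑ k, σ k * |x k| := by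
  obtain ⟨s, hs, hS, hsC⟩ := exists_nonneg_coeffs
    (convex_convexHull ℝ (Set.range (pietschDefect A K)))
    (subset_convexHull ℝ _ ⟨0, by ext; simp [pietschDefect]⟩)
    (fun v hv => exists_nonneg_of_mem_convexHull hN A h hv)
  refine ⟨fun k => s k / ∑ j, s j, fun k => div_nonneg (hs k) hS.le, ?_, fun x => ?_⟩
  · rw [← sum_div, div_self hS.ne']
  · have hx := hsC _ (subset_convexHull ℝ _ ⟨x, rfl⟩)
    simp only [pietschDefect, mul_sub, sum_sub_distrib] at hx
    rw [← Finset.sum_mul] at hx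
    have hK' : ∑ k, s k * (K * |x k|) = K * ∑ k, s k * |x k| := by
      rw [mul_sum]; exact sum_congr rfl fun k _ => by ring
    have hd : ∑ k, s k / (∑ j, s j) * |x k| = (∑ k, s k * |x k|) / ∑ j, s j := by
      rw [sum_div]; exact sum_congr rfl fun k _ => by ring
    rw [hd, ← mul_div_assoc, le_div_iff₀ hS]
    linarith
end

section
/- (ℓ₁ additivity of the transportation norm over separated sets.) Let S₁,...,S_k be pairwise disjoint compact subsets of ℝ² such that for all j ≠ l, dist(S_j, S_l) = min_{a∈S_j, b∈S_l} ‖a−b‖₂ > max(diam S_j, diam S_l). For each j let μ_j be a finitely supported signed measure on ℝ² with support contained in S_j and μ_j(S_j) = 0. Then ‖Σ_{j=1}^k μ_j‖_τ = Σ_{j=1}^k ‖μ_j‖_τ, where the transportation norms are taken with respect to the Euclidean metric on ℝ². In particular, in computing ‖Σ_j μ_j‖_τ it suffices to consider transportation plans supported on ∪_j (S_j × S_j). -/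
/-!
The inequality `≤` holds because plans for the `μ j` add up to a plan for `∑ j, μ j`: the supports
are disjoint, so positive and negative parts are additive.

For `≥`, any plan `π` for the sum is rerouted into plans for the individual `μ j` without
increasing the cost. Since `μ j` has mass zero, the mass that `π` moves out of `S j` equals the
mass `m` that it moves into `S j`. Keep the part of `π` inside `S j × S j` and replace the mass
crossing the boundary of `S j` by a product coupling of its source distribution in `S j` with its
target distribution in `S j`. This coupling costs at most `m * diam (S j)`, which by the separation
hypothesis is at most the cost in `π` of the mass entering `S j`. So the new plan for `μ j` costs
at most the part of the cost of `π` with target in `S j` (`IsPlan.exists_block`), and these parts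
add up to the cost of `π`.

All of this is done with finite sums over one finite set `T` containing all supports
(`tauE_eq_sInf`).
-/

open Finset

/-- Transportation cost norm of a finitely supported signed measure of total mass zero
on the Euclidean plane: the infimum of `Σ d(x,y)·π(x,y)` over finitely supported
nonnegative `π` with marginals `μ⁺` and `μ⁻`. -/
noncomputable def tauE (μ : EuclideanSpace ℝ (Fin 2) → ℝ) : ℝ :=
  sInf { c : ℝ | ∃ π : EuclideanSpace ℝ (Fin 2) → EuclideanSpace ℝ (Fin 2) → ℝ,
    (Set.Finite { p : EuclideanSpace ℝ (Fin 2) × EuclideanSpace ℝ (Fin 2) |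
      π p.1 p.2 ≠ 0 }) ∧
    (∀ x y, 0 ≤ π x y) ∧
    (∀ x, ∑ᶠ y, π x y = max (μ x) 0) ∧
    (∀ y, ∑ᶠ x, π x y = max (-μ y) 0) ∧
    c = ∑ᶠ x, ∑ᶠ y, dist x y * π x y }

/-- `π` is a transportation plan for the signed measure `μ`, living on the finite set `T`. -/
structure IsPlan {α : Type*} (T : Finset α) (μ : α → ℝ) (π : α → α → ℝ) : Prop where
  nonneg : ∀ x y, 0 ≤ π x y
  supp : ∀ x y, π x y ≠ 0 → x ∈ T ∧ y ∈ T
  row : ∀ x, ∑ y ∈ T, π x y = max (μ x) 0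
  col : ∀ y, ∑ x ∈ T, π x y = max (-μ y) 0

/-- The cost of a plan living on the finite set `T`. -/
noncomputable def planCost {α : Type*} [Dist α] (T : Finset α) (π : α → α → ℝ) : ℝ :=
  ∑ x ∈ T, ∑ y ∈ T, dist x y * π x y

theorem tauE_eq_sInf (T : Finset (EuclideanSpace ℝ (Fin 2)))
    (μ : EuclideanSpace ℝ (Fin 2) → ℝ) (hμ : ∀ x, μ x ≠ 0 → x ∈ T) :
    tauE μ = sInf {c | ∃ π, IsPlan T μ π ∧ c = planCost T π} := by
  have key : ∀ π : EuclideanSpace ℝ (Fin 2) → EuclideanSpace ℝ (Fin 2) → ℝ,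
      (∀ x y, π x y ≠ 0 → x ∈ T ∧ y ∈ T) →
      (∀ x, ∑ᶠ y, π x y = ∑ y ∈ T, π x y) ∧ (∀ y, ∑ᶠ x, π x y = ∑ x ∈ T, π x y) ∧
      ∑ᶠ x, ∑ᶠ y, dist x y * π x y = planCost T π := by
    intro π h
    refine ⟨fun x => finsum_eq_sum_of_support_subset _ fun y hy => (h x y hy).2,
      fun y => finsum_eq_sum_of_support_subset _ fun x hx => (h x y hx).1, ?_⟩
    have h1 : ∀ x, ∑ᶠ y, dist x y * π x y = ∑ y ∈ T, dist x y * π x y := fun x =>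
      finsum_eq_sum_of_support_subset _ fun y hy => (h x y (right_ne_zero_of_mul hy)).2
    simp only [h1]
    refine finsum_eq_sum_of_support_subset _ fun x hx => ?_
    obtain ⟨y, -, hy⟩ := Finset.exists_ne_zero_of_sum_ne_zero hx
    exact (h x y (right_ne_zero_of_mul hy)).1
  unfold tauE
  congr 1
  ext c
  constructor
  · rintro ⟨π, hf, h0, hr, hc, rfl⟩
    have hs : ∀ x y, π x y ≠ 0 → x ∈ T ∧ y ∈ T := by
      intro x y hxy
      have hpos : 0 < π x y := lt_of_le_of_ne (h0 x y) hxy.symm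
      have h1 : π x y ≤ ∑ᶠ y, π x y :=
        single_le_finsum y
          ((hf.image Prod.snd).subset fun y' hy' => ⟨(x, y'), hy', rfl⟩) (h0 x)
      have h2 : π x y ≤ ∑ᶠ x, π x y :=
        single_le_finsum (f := fun x => π x y) x
          ((hf.image Prod.fst).subset fun x' hx' => ⟨(x', y), hx', rfl⟩) (fun x => h0 x y)
      rw [hr] at h1
      rw [hc] at h2
      constructor
      · apply hμ
        intro h
        simp only [h, max_self] at h1
        linarith
      · apply hμ
        intro h
        simp only [h, neg_zero, max_self] at h2
        linarith
    obtain ⟨k1, k2, k3⟩ := key π hs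
    exact ⟨π, ⟨h0, hs, fun x => by rw [← k1, hr], fun y => by rw [← k2, hc]⟩, k3⟩
  · rintro ⟨π, hπ, rfl⟩
    obtain ⟨k1, k2, k3⟩ := key π hπ.supp
    refine ⟨π, ?_, hπ.nonneg, fun x => by rw [k1, hπ.row], fun y => by rw [k2, hπ.col], k3.symm⟩
    refine (T ×ˢ T).finite_toSet.subset fun p hp => ?_
    simpa using hπ.supp _ _ hp

/-- The normalised product of two nonnegative distributions of equal mass couples them. -/
theorem exists_coupling {α : Type*} (T : Finset α) (a b : α → ℝ)
    (ha : ∀ x, 0 ≤ a x) (hb : ∀ x, 0 ≤ b x)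
    (haT : ∀ x, a x ≠ 0 → x ∈ T) (hbT : ∀ x, b x ≠ 0 → x ∈ T)
    (hab : ∑ x ∈ T, a x = ∑ x ∈ T, b x) :
    ∃ γ : α → α → ℝ, (∀ x y, 0 ≤ γ x y) ∧ (∀ x y, γ x y ≠ 0 → a x ≠ 0 ∧ b y ≠ 0) ∧
      (∀ x, ∑ y ∈ T, γ x y = a x) ∧ (∀ y, ∑ x ∈ T, γ x y = b y) := by
  have aux : ∀ c : α → ℝ, (∀ x, 0 ≤ c x) → (∀ x, c x ≠ 0 → x ∈ T) →
      ∀ x, c x * (∑ x ∈ T, c x) / (∑ x ∈ T, c x) = c x := by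
    intro c hc hcT x
    rcases eq_or_ne (∑ x ∈ T, c x) 0 with h | h
    · -- total mass zero: the quotient is the junk value `0`, and `c` vanishes
      have : c x = 0 := by
        by_contra hx
        exact hx ((Finset.sum_eq_zero_iff_of_nonneg fun i _ => hc i).1 h x (hcT x hx))
      simp [this]
    · field_simp
  refine ⟨fun x y => a x * b y / ∑ x ∈ T, a x, fun x y => ?_, fun x y h => ?_,
    fun x => ?_, fun y => ?_⟩
  · exact div_nonneg (mul_nonneg (ha x) (hb y)) (Finset.sum_nonneg fun i _ => ha i)
  · constructor <;> rintro h' <;> simp [h'] at h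
  · rw [← Finset.sum_div, ← Finset.mul_sum, ← hab]
    exact aux a ha haT x
  · rw [← Finset.sum_div, ← Finset.sum_mul, hab, mul_comm]
    exact aux b hb hbT y

theorem sum_posPart_eq_sum_negPart {α : Type*} (T : Finset α) (μ : α → ℝ)
    (h : ∑ x ∈ T, μ x = 0) : ∑ x ∈ T, max (μ x) 0 = ∑ x ∈ T, max (-μ x) 0 := by
  rw [← sub_eq_zero, ← Finset.sum_sub_distrib]
  refine Eq.trans ?_ h
  refine Finset.sum_congr rfl fun x _ => ?_
  rcases le_total (μ x) 0 with hx | hx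
  · rw [max_eq_right hx, max_eq_left (by linarith)]; ring
  · rw [max_eq_left hx, max_eq_right (by linarith)]; ring

theorem exists_isPlan {α : Type*} (T : Finset α) (μ : α → ℝ) (hμ : ∀ x, μ x ≠ 0 → x ∈ T)
    (h : ∑ x ∈ T, μ x = 0) : ∃ π, IsPlan T μ π := by
  have h1 : ∀ x, max (μ x) 0 ≠ 0 → x ∈ T := fun x hx => hμ x fun h0 => hx (by simp [h0])
  have h2 : ∀ x, max (-μ x) 0 ≠ 0 → x ∈ T := fun x hx => hμ x fun h0 => hx (by simp [h0])
  obtain ⟨γ, g0, gs, gr, gc⟩ := exists_coupling T (fun x => max (μ x) 0) (fun x => max (-μ x) 0)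
    (fun x => le_max_right _ _) (fun x => le_max_right _ _) h1 h2
    (sum_posPart_eq_sum_negPart T μ h)
  exact ⟨γ, g0, fun x y hxy => ⟨h1 x (gs x y hxy).1, h2 y (gs x y hxy).2⟩, gr, gc⟩

theorem planCost_nonneg {α : Type*} [PseudoMetricSpace α] {T : Finset α} {π : α → α → ℝ}
    (h : ∀ x y, 0 ≤ π x y) : 0 ≤ planCost T π :=
  Finset.sum_nonneg fun x _ => Finset.sum_nonneg fun y _ => mul_nonneg dist_nonneg (h x y)

theorem tauE_le_planCost {T : Finset (EuclideanSpace ℝ (Fin 2))}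
    {μ : EuclideanSpace ℝ (Fin 2) → ℝ} (hμ : ∀ x, μ x ≠ 0 → x ∈ T)
    {π : EuclideanSpace ℝ (Fin 2) → EuclideanSpace ℝ (Fin 2) → ℝ} (hπ : IsPlan T μ π) :
    tauE μ ≤ planCost T π := by
  rw [tauE_eq_sInf T μ hμ]
  refine csInf_le ⟨0, ?_⟩ ⟨π, hπ, rfl⟩
  rintro _ ⟨π', h', rfl⟩
  exact planCost_nonneg h'.nonneg

open Classical in
/-- Rerouting: if the measure `ν` has a plan `π`, and its restriction `μ` to a bounded set `S` has
mass zero and the points of `T` outside `S` have distance at least `diam S` from `S`, then `μ` has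
a plan whose cost is at most the part of the cost of `π` with target in `S`. -/
theorem IsPlan.exists_block {α : Type*} [PseudoMetricSpace α] {T : Finset α} {ν : α → ℝ}
    {π : α → α → ℝ} (hπ : IsPlan T ν π) (S : Set α) (hS : Bornology.IsBounded S)
    (hfar : ∀ x ∈ T, x ∉ S → ∀ y ∈ S, Metric.diam S ≤ dist x y)
    (μ : α → ℝ) (hin : ∀ x ∈ S, μ x = ν x) (hout : ∀ x, x ∉ S → μ x = 0)
    (hz : ∑ x ∈ T, μ x = 0) :
    ∃ ρ, IsPlan T μ ρ ∧
      planCost T ρ ≤ ∑ x ∈ T, ∑ y ∈ T, if y ∈ S then dist x y * π x y else 0 := by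
  -- `κ` is the part of `π` inside `S`; `a`, `b` are the distributions of mass leaving and
  -- entering `S`
  set κ : α → α → ℝ := fun x y => if x ∈ S ∧ y ∈ S then π x y else 0 with hκ
  set a : α → ℝ := fun x => ∑ y ∈ T, if x ∈ S ∧ y ∉ S then π x y else 0 with ha
  set b : α → ℝ := fun y => ∑ x ∈ T, if x ∉ S ∧ y ∈ S then π x y else 0 with hb
  have hrow : ∀ x, ∑ y ∈ T, κ x y + a x = max (μ x) 0 := by
    intro x
    rw [ha, ← Finset.sum_add_distrib]
    by_cases hx : x ∈ S
    · rw [hin x hx, ← hπ.row x]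
      refine Finset.sum_congr rfl fun y _ => ?_
      by_cases hy : y ∈ S <;> simp [hκ, hx, hy]
    · simp [hκ, hx, hout x hx]
  have hcol : ∀ y, ∑ x ∈ T, κ x y + b y = max (-μ y) 0 := by
    intro y
    rw [hb, ← Finset.sum_add_distrib]
    by_cases hy : y ∈ S
    · rw [hin y hy, ← hπ.col y]
      refine Finset.sum_congr rfl fun x _ => ?_
      by_cases hx : x ∈ S <;> simp [hκ, hx, hy]
    · simp [hκ, hy, hout y hy]
  have hmass : ∑ x ∈ T, a x = ∑ x ∈ T, b x := by
    have h := sum_posPart_eq_sum_negPart T μ hz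
    simp only [← hrow, ← hcol, Finset.sum_add_distrib] at h
    rw [Finset.sum_comm] at h
    linarith
  have ha0 : ∀ x, 0 ≤ a x := fun x => Finset.sum_nonneg fun y _ => by
    split_ifs
    exacts [hπ.nonneg x y, le_rfl]
  have hb0 : ∀ y, 0 ≤ b y := fun y => Finset.sum_nonneg fun x _ => by
    split_ifs
    exacts [hπ.nonneg x y, le_rfl]
  have haS : ∀ x, a x ≠ 0 → x ∈ T ∧ x ∈ S := by
    intro x hx
    obtain ⟨y, -, hy⟩ := Finset.exists_ne_zero_of_sum_ne_zero hx
    rw [ne_eq, ite_eq_right_iff, Classical.not_imp] at hy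
    exact ⟨(hπ.supp x y hy.2).1, hy.1.1⟩
  have hbS : ∀ y, b y ≠ 0 → y ∈ T ∧ y ∈ S := by
    intro y hy
    obtain ⟨x, -, hx⟩ := Finset.exists_ne_zero_of_sum_ne_zero hy
    rw [ne_eq, ite_eq_right_iff, Classical.not_imp] at hx
    exact ⟨(hπ.supp x y hx.2).2, hx.1.2⟩
  obtain ⟨γ, g0, gs, gr, gc⟩ := exists_coupling T a b ha0 hb0 (fun x h => (haS x h).1)
    (fun x h => (hbS x h).1) hmass
  refine ⟨fun x y => κ x y + γ x y, ⟨fun x y => ?_, fun x y h => ?_, fun x => ?_, fun y => ?_⟩, ?_⟩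
  · refine add_nonneg ?_ (g0 x y)
    simp only [hκ]
    split_ifs
    exacts [hπ.nonneg x y, le_rfl]
  · by_cases hg : γ x y = 0
    · rw [hg, add_zero, hκ] at h
      simp only [ne_eq, ite_eq_right_iff, Classical.not_imp] at h
      exact hπ.supp x y h.2
    · exact ⟨(haS x (gs x y hg).1).1, (hbS y (gs x y hg).2).1⟩
  · rw [Finset.sum_add_distrib, gr, hrow]
  · rw [Finset.sum_add_distrib, gc, hcol]
  · have hγ : ∑ x ∈ T, ∑ y ∈ T, dist x y * γ x y ≤
        ∑ x ∈ T, ∑ y ∈ T, if x ∉ S ∧ y ∈ S then dist x y * π x y else 0 := by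
      calc ∑ x ∈ T, ∑ y ∈ T, dist x y * γ x y
          ≤ ∑ x ∈ T, ∑ y ∈ T, Metric.diam S * γ x y := by
            refine Finset.sum_le_sum fun x _ => Finset.sum_le_sum fun y _ => ?_
            by_cases hg : γ x y = 0
            · simp [hg]
            · exact mul_le_mul_of_nonneg_right
                (Metric.dist_le_diam_of_mem hS (haS x (gs x y hg).1).2 (hbS y (gs x y hg).2).2)
                (g0 x y)
        _ = Metric.diam S * ∑ y ∈ T, b y := by
            rw [← hmass]
            simp only [← Finset.mul_sum, gr]
        _ = ∑ x ∈ T, ∑ y ∈ T, Metric.diam S * if x ∉ S ∧ y ∈ S then π x y else 0 := by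
            rw [Finset.sum_comm (s := T)]
            simp only [Finset.mul_sum]
        _ ≤ _ := by
            refine Finset.sum_le_sum fun x hx => Finset.sum_le_sum fun y _ => ?_
            split_ifs with h
            · exact mul_le_mul_of_nonneg_right (hfar x hx h.1 y h.2) (hπ.nonneg x y)
            · simp
    calc planCost T (fun x y => κ x y + γ x y)
        = ∑ x ∈ T, ∑ y ∈ T, dist x y * κ x y + ∑ x ∈ T, ∑ y ∈ T, dist x y * γ x y := by
          simp only [planCost, mul_add, Finset.sum_add_distrib]
      _ ≤ ∑ x ∈ T, ∑ y ∈ T, dist x y * κ x y +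
          ∑ x ∈ T, ∑ y ∈ T, (if x ∉ S ∧ y ∈ S then dist x y * π x y else 0) := by gcongr
      _ = _ := by
          simp only [← Finset.sum_add_distrib]
          refine Finset.sum_congr rfl fun x _ => Finset.sum_congr rfl fun y _ => ?_
          by_cases hx : x ∈ S <;> by_cases hy : y ∈ S <;> simp [hκ, hx, hy]

/-- ℓ₁ additivity of the transportation norm over separated sets: if `S₁,…,S_k` are
pairwise disjoint compact sets with mutual distances exceeding their diameters, and each
`μ_j` is a finitely supported signed measure of mass zero supported in `S_j`, then
`‖Σ_j μ_j‖_τ = Σ_j ‖μ_j‖_τ`. -/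
theorem tauE_additive_over_separated_sets (k : ℕ)
    (S : Fin k → Set (EuclideanSpace ℝ (Fin 2)))
    (hcomp : ∀ j, IsCompact (S j))
    (hdisj : ∀ j l, j ≠ l → Disjoint (S j) (S l))
    (hsep : ∀ j l, j ≠ l → ∀ a ∈ S j, ∀ b ∈ S l,
      max (Metric.diam (S j)) (Metric.diam (S l)) < dist a b)
    (μ : Fin k → (EuclideanSpace ℝ (Fin 2) → ℝ))
    (hfin : ∀ j, (Function.support (μ j)).Finite)
    (hsupp : ∀ j, Function.support (μ j) ⊆ S j)
    (hzero : ∀ j, ∑ᶠ x, μ j x = 0) :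
    tauE (∑ j, μ j) = ∑ j, tauE (μ j) := by
  classical
  set T : Finset (EuclideanSpace ℝ (Fin 2)) := Finset.univ.biUnion fun j => (hfin j).toFinset
    with hT
  have hμT : ∀ j x, μ j x ≠ 0 → x ∈ T := fun j x h => by
    simp only [hT, Finset.mem_biUnion, Finset.mem_univ, true_and, Set.Finite.mem_toFinset]
    exact ⟨j, h⟩
  have hTS : ∀ x ∈ T, ∃ j, x ∈ S j := fun x h => by
    simp only [hT, Finset.mem_biUnion, Finset.mem_univ, true_and, Set.Finite.mem_toFinset] at h
    obtain ⟨j, hj⟩ := h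
    exact ⟨j, hsupp j hj⟩
  have huniq : ∀ j l x, x ∈ S j → x ∈ S l → j = l := fun j l x hj hl => by
    by_contra hne
    exact Set.disjoint_left.1 (hdisj j l hne) hj hl
  have hout : ∀ j x, x ∉ S j → μ j x = 0 := fun j x hx => by
    by_contra h
    exact hx (hsupp j h)
  have hin : ∀ j, ∀ x ∈ S j, μ j x = (∑ l, μ l) x := fun j x hx => by
    rw [Finset.sum_apply, Finset.sum_eq_single j _ (by simp)]
    exact fun l _ hl => hout l x fun hxl => hl (huniq l j x hxl hx)
  have hsumT : ∀ x, (∑ l, μ l) x ≠ 0 → x ∈ T := fun x h => by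
    rw [Finset.sum_apply] at h
    obtain ⟨j, -, hj⟩ := Finset.exists_ne_zero_of_sum_ne_zero h
    exact hμT j x hj
  have hz : ∀ j, ∑ x ∈ T, μ j x = 0 := fun j => by
    rw [← finsum_eq_sum_of_support_subset (μ j) (s := T) fun x hx => hμT j x hx]
    exact hzero j
  have hpart : ∀ f : ℝ → ℝ, f 0 = 0 → ∀ x, ∑ j, f (μ j x) = f ((∑ l, μ l) x) := by
    intro f hf x
    by_cases hx : ∃ j, x ∈ S j
    · obtain ⟨j, hj⟩ := hx
      rw [← hin j x hj, Finset.sum_eq_single j _ (by simp)]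
      intro l _ hl
      rw [hout l x fun hxl => hl (huniq l j x hxl hj), hf]
    · push Not at hx
      simp [Finset.sum_apply, fun j => hout j x (hx j), hf]
  apply le_antisymm
  · refine le_of_forall_pos_le_add fun ε hε => ?_
    have hδ : 0 < ε / (k + 1 : ℝ) := by positivity
    have hex : ∀ j, ∃ π, IsPlan T (μ j) π ∧ planCost T π < tauE (μ j) + ε / (k + 1 : ℝ) := by
      intro j
      obtain ⟨π₀, h₀⟩ := exists_isPlan T (μ j) (hμT j) (hz j)
      rw [tauE_eq_sInf T (μ j) (hμT j)]
      obtain ⟨_, ⟨π, hπ, rfl⟩, hlt⟩ := exists_lt_of_csInf_lt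
        (s := {c | ∃ π, IsPlan T (μ j) π ∧ c = planCost T π}) ⟨_, π₀, h₀, rfl⟩
        (lt_add_of_pos_right _ hδ)
      exact ⟨π, hπ, hlt⟩
    choose π hπ hlt using hex
    have hplan : IsPlan T (∑ j, μ j) (fun x y => ∑ j, π j x y) := by
      refine ⟨fun x y => Finset.sum_nonneg fun j _ => (hπ j).nonneg x y, fun x y h => ?_,
        fun x => ?_, fun y => ?_⟩
      · obtain ⟨j, -, hj⟩ := Finset.exists_ne_zero_of_sum_ne_zero h
        exact (hπ j).supp x y hj
      · rw [Finset.sum_comm]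
        simp only [(hπ _).row]
        exact hpart (fun t => max t 0) (by simp) x
      · rw [Finset.sum_comm]
        simp only [(hπ _).col]
        exact hpart (fun t => max (-t) 0) (by simp) y
    calc tauE (∑ j, μ j) ≤ planCost T (fun x y => ∑ j, π j x y) := tauE_le_planCost hsumT hplan
      _ = ∑ j, planCost T (π j) := by
          simp only [planCost, Finset.mul_sum]
          rw [Finset.sum_comm (s := Finset.univ)]
          exact Finset.sum_congr rfl fun x _ => Finset.sum_comm
      _ ≤ ∑ j, (tauE (μ j) + ε / (k + 1 : ℝ)) := Finset.sum_le_sum fun j _ => (hlt j).le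
      _ = ∑ j, tauE (μ j) + k * (ε / (k + 1 : ℝ)) := by simp [Finset.sum_add_distrib]
      _ ≤ ∑ j, tauE (μ j) + ε := by
          have : (k + 1 : ℝ) * (ε / (k + 1 : ℝ)) = ε := by field_simp
          linarith
  · have hzsum : ∑ x ∈ T, (∑ l, μ l) x = 0 := by
      simp only [Finset.sum_apply]
      rw [Finset.sum_comm]
      simp [hz]
    obtain ⟨π₀, h₀⟩ := exists_isPlan T _ hsumT hzsum
    rw [tauE_eq_sInf T _ hsumT]
    refine le_csInf ⟨_, π₀, h₀, rfl⟩ ?_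
    rintro _ ⟨π, hπ, rfl⟩
    have hj : ∀ j, tauE (μ j) ≤
        ∑ x ∈ T, ∑ y ∈ T, if y ∈ S j then dist x y * π x y else 0 := by
      intro j
      obtain ⟨ρ, hρ, hle⟩ := hπ.exists_block (S j) (hcomp j).isBounded
        (fun x hxT hx y hy => by
          obtain ⟨l, hl⟩ := hTS x hxT
          have hlj : l ≠ j := by rintro rfl; exact hx hl
          exact (le_max_right _ _).trans (hsep l j hlj x hl y hy).le)
        (μ j) (hin j) (hout j) (hz j)
      exact (tauE_le_planCost (hμT j) hρ).trans hle
    calc ∑ j, tauE (μ j)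
        ≤ ∑ j, ∑ x ∈ T, ∑ y ∈ T, (if y ∈ S j then dist x y * π x y else 0) :=
          Finset.sum_le_sum fun j _ => hj j
      _ = ∑ x ∈ T, ∑ y ∈ T, ∑ j, (if y ∈ S j then dist x y * π x y else 0) := by
          rw [Finset.sum_comm]
          exact Finset.sum_congr rfl fun x _ => Finset.sum_comm
      _ = planCost T π := by
          refine Finset.sum_congr rfl fun x _ => Finset.sum_congr rfl fun y hy => ?_
          obtain ⟨j, hyj⟩ := hTS y hy
          rw [Finset.sum_eq_single j _ (by simp), if_pos hyj]
          exact fun l _ hl => if_neg fun hyl => hl (huniq l j y hyl hyj)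
end
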